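/- Let 𝐫 = ((r_1,s_1),…,(r_v,s_v)) and 𝐭 = ((t_1,u_1),…,(t_w,u_w)) be vectors of pairs of integers with all s_i, u_j ≠ 0 and all the ratios r_i/s_i and t_j/u_j not in ℤ_{≤0}. Then there exists a positive integer B such that for every integer b ≥ B, the image Δ_b^{𝐫,𝐭}([0,1]) of the interval [0,1] under Δ_b^{𝐫,𝐭} equals the image Ξ_{𝐫,𝐭}(b̲, ℝ) of ℝ under Ξ_{𝐫,𝐭}(b̲, ·), where b̲ is the unique representative of b modulo d_{𝐫,𝐭} in {1, …, d_{𝐫,𝐭}}. -/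

import Mathlib

open Polynomial
open scoped Classical

noncomputable section

/-- The generalized Dwork map `D_b(α)`: the unique rational whose reduced denominator is
coprime to `b` and such that `b·D_b(α) − α ∈ {0, 1, …, b−1}`. -/
def dwork (b : ℕ) (α : ℚ) : ℚ :=
  if h : ∃ θ : ℚ, Nat.Coprime θ.den b ∧ ∃ k : ℤ, 0 ≤ k ∧ k < (b : ℤ) ∧ (b : ℚ) * θ - α = (k : ℚ)
  then h.choose else 0

/-- `α ∈ ℤ_{≤0}`. -/
def IsNonPosInt (α : ℚ) : Prop := ∃ m : ℤ, m ≤ 0 ∧ α = (m : ℚ)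

/-- `α ∈ ℤ_{>0}`. -/
def IsPosInt (α : ℚ) : Prop := ∃ m : ℤ, 0 < m ∧ α = (m : ℚ)

/-- `𝔫_α`. -/
def frakn (α : ℚ) : ℤ := if 0 ≤ α then α.num else |α.num| + 1

/-- `⟨x⟩`: the fractional part of `x` if `x ∉ ℤ`, and `1` if `x ∈ ℤ`. -/
def cangle (x : ℝ) : ℝ := if ∃ m : ℤ, x = (m : ℝ) then 1 else Int.fract x

/-- Christol order `x ⪯ y`. -/
def cle (x y : ℝ) : Prop := cangle x < cangle y ∨ (cangle x = cangle y ∧ y ≤ x)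

/-- The step function `δ_b(r, s, ·)`. -/
def qdelta (b : ℕ) (r s : ℤ) (x : ℝ) : ℤ :=
  if Int.gcd (s / (Nat.gcd (Int.gcd r s) b : ℤ)) (((b / Nat.gcd (Int.gcd r s) b : ℕ)) : ℤ) = 1 then
    ⌊(Nat.gcd (Int.gcd r s) b : ℝ) * x
        - ((dwork (b / Nat.gcd (Int.gcd r s) b) ((r : ℚ) / (s : ℚ)) : ℚ) : ℝ)
        - ((⌊1 - (r : ℚ) / (s : ℚ)⌋ : ℤ) : ℝ) / ((b / Nat.gcd (Int.gcd r s) b : ℕ) : ℝ)⌋ + 1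
  else 0

/-- The Landau-type step function `Δ_b^{𝐫,𝐭}`. -/
def qDeltaFn {v w : ℕ} (b : ℕ) (rr : Fin v → ℤ × ℤ) (tt : Fin w → ℤ × ℤ) (x : ℝ) : ℤ :=
  (∑ i, qdelta b (rr i).1 (rr i).2 x) - (∑ j, qdelta b (tt j).1 (tt j).2 x)

/-- The q-Pochhammer symbol `(q^r; q^s)_n` for `n ∈ ℕ`, inside `ℚ(q)`. -/
def qPoch (r s : ℤ) (n : ℕ) : RatFunc ℚ :=
  ∏ i ∈ Finset.range n, (1 - RatFunc.X ^ (r + s * (i : ℤ)))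

/-- The q-Pochhammer symbol `(q^r; q^s)_n` for `n ∈ ℤ`. -/
def qPochZ (r s : ℤ) (n : ℤ) : RatFunc ℚ :=
  if 0 ≤ n then qPoch r s n.toNat else (qPoch (r - s) (-s) (-n).toNat)⁻¹

/-- Multiplicity of `p` in `g`: the largest `k` with `p^k ∣ g`. -/
def polyMult (p g : Polynomial ℚ) : ℕ := sSup {k : ℕ | p ^ k ∣ g}

/-- The valuation `v_{φ_b}` on `ℚ(q)` attached to the `b`-th cyclotomic polynomial. -/
def cycVal (b : ℕ) (f : RatFunc ℚ) : ℤ :=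
  (polyMult (cyclotomic b ℚ) f.num : ℤ) - (polyMult (cyclotomic b ℚ) f.denom : ℤ)

/-- The image of an integer polynomial in `ℚ(q)`. -/
def polyZ (g : Polynomial ℤ) : RatFunc ℚ :=
  algebraMap (Polynomial ℚ) (RatFunc ℚ) (g.map (Int.castRingHom ℚ))

/-- `f ∈ ℤ[q⁻¹, q]`. -/
def IsIntLaurent (f : RatFunc ℚ) : Prop :=
  ∃ (m : ℕ) (g : Polynomial ℤ), f * RatFunc.X ^ m = polyZ g

/-- `f ∈ ℤ[q]`. -/
def IsIntPoly (f : RatFunc ℚ) : Prop := ∃ g : Polynomial ℤ, f = polyZ g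

/-- The ratio attached to a pair of integers. -/
def ratOf (p : ℤ × ℤ) : ℚ := (p.1 : ℚ) / (p.2 : ℚ)

/-- The q-hypergeometric term `Q_{𝐫,𝐭}(q; n)`, `n ∈ ℕ`. -/
def qHyp {v w : ℕ} (rr : Fin v → ℤ × ℤ) (tt : Fin w → ℤ × ℤ) (n : ℕ) : RatFunc ℚ :=
  (∏ i, qPoch (rr i).1 (rr i).2 n) / (∏ j, qPoch (tt j).1 (tt j).2 n)

/-- The q-hypergeometric term `Q_{𝐫,𝐭}(q; n)`, `n ∈ ℤ`. -/
def qHypZ {v w : ℕ} (rr : Fin v → ℤ × ℤ) (tt : Fin w → ℤ × ℤ) (n : ℤ) : RatFunc ℚ :=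
  (∏ i, qPochZ (rr i).1 (rr i).2 n) / (∏ j, qPochZ (tt j).1 (tt j).2 n)

/-- `c := gcd(r, s, b)`. -/
def cOf (p : ℤ × ℤ) (b : ℕ) : ℕ := Nat.gcd (Int.gcd p.1 p.2) b

/-- Membership in `V_b` (resp. `W_b`): `gcd(s, b) = gcd(r, s, b)`. -/
def inV (p : ℤ × ℤ) (b : ℕ) : Prop := Nat.gcd p.2.natAbs b = cOf p b

/-- `d_{𝐫,𝐭}`: the lcm of all the `s_i` and `u_j`. -/
def dRT {v w : ℕ} (rr : Fin v → ℤ × ℤ) (tt : Fin w → ℤ × ℤ) : ℕ :=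
  Nat.lcm (Finset.univ.lcm fun i => ((rr i).2).natAbs)
    (Finset.univ.lcm fun j => ((tt j).2).natAbs)

/-- `b̃`: the greatest divisor of `b` coprime to `d`. -/
def btilde (d b : ℕ) : ℕ := Nat.findGreatest (fun k => k ∣ b ∧ Nat.Coprime k d) b

/-- The unique `a ∈ {1,…,d}` with `a·b̃ ≡ 1 (mod d)`. -/
def aOf (d b : ℕ) : ℕ :=
  if h : ∃ a, 1 ≤ a ∧ a ≤ d ∧ (a * btilde d b) % d = 1 % d then h.choose else 1

/-- The representative of `b` modulo `d` lying in `{1,…,d}`. -/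
def repMod (d b : ℕ) : ℕ := if b % d = 0 then d else b % d

/-- The jump abscissa `(⟨e·α⟩ + k)/c − ⌊1 − a·α⌋`. -/
def jumpPt (p : ℤ × ℤ) (b : ℕ) (a ei : ℤ) (k : ℕ) : ℝ :=
  (cangle (((ei : ℚ) * ratOf p : ℚ) : ℝ) + (k : ℝ)) / (cOf p b : ℝ)
    - ((⌊1 - (a : ℚ) * ratOf p⌋ : ℤ) : ℝ)

/-- Number of pairs `(i,k)` with jump abscissa `⪯ x` coming from one pair `p`. -/
def XiCount (p : ℤ × ℤ) (b : ℕ) (a ei : ℤ) (x : ℝ) : ℕ :=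
  if inV p b then ((Finset.range (cOf p b)).filter fun k => cle (jumpPt p b a ei k) x).card else 0

/-- The generalized Christol step function `Ξ_{𝐫,𝐭}(b, ·)`, relative to choices `e`, `f`. -/
def Xi {v w : ℕ} (rr : Fin v → ℤ × ℤ) (tt : Fin w → ℤ × ℤ) (b : ℕ)
    (e : Fin v → ℤ) (f : Fin w → ℤ) (x : ℝ) : ℤ :=
  (∑ i, (XiCount (rr i) b ((aOf (dRT rr tt) b : ℕ) : ℤ) (e i) x : ℤ))
    - (∑ j, (XiCount (tt j) b ((aOf (dRT rr tt) b : ℕ) : ℤ) (f j) x : ℤ))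

/-- `ei` is an admissible choice for the pair `p` and `b`: positive with `b·ei ≡ c (mod s)`. -/
def goodChoice (p : ℤ × ℤ) (b : ℕ) (ei : ℤ) : Prop :=
  inV p b → 0 < ei ∧ p.2 ∣ ((b : ℤ) * ei - (cOf p b : ℤ))

end

noncomputable section

/-! ### The representative modulo `d` -/

lemma repMod_modEq (d b : ℕ) : repMod d b ≡ b [MOD d] := by
  unfold repMod Nat.ModEq
  split_ifs with h <;> simp [h]

lemma gcd_repMod {n d : ℕ} (h : n ∣ d) (b : ℕ) : Nat.gcd n (repMod d b) = Nat.gcd n b := by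
  have := ((repMod_modEq d b).of_dvd h).gcd_eq
  rwa [Nat.gcd_comm n, Nat.gcd_comm n]

lemma cOf_repMod {p : ℤ × ℤ} {d : ℕ} (h : p.2.natAbs ∣ d) (b : ℕ) :
    cOf p (repMod d b) = cOf p b :=
  gcd_repMod ((Int.natAbs_dvd_natAbs.2 (Int.gcd_dvd_right p.1 p.2)).trans h) b

lemma inV_repMod {p : ℤ × ℤ} {d : ℕ} (h : p.2.natAbs ∣ d) (b : ℕ) :
    inV p (repMod d b) ↔ inV p b := by
  unfold inV
  rw [cOf_repMod h, gcd_repMod h]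

lemma goodChoice_repMod {p : ℤ × ℤ} {d b : ℕ} {e : ℤ} (h : p.2.natAbs ∣ d)
    (hV : inV p b) (he : goodChoice p (repMod d b) e) :
    p.2 ∣ (b : ℤ) * e - (cOf p b : ℤ) := by
  have h1 := (he ((inV_repMod h b).2 hV)).2
  rw [cOf_repMod h] at h1
  have h2 : p.2 ∣ (b : ℤ) - (repMod d b : ℤ) :=
    (Int.natAbs_dvd.1 (Int.natCast_dvd_natCast.2 h)).trans
      (Nat.modEq_iff_dvd.1 (repMod_modEq d b))
  have h3 : (b : ℤ) * e - cOf p b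
      = ((repMod d b : ℤ) * e - cOf p b) + ((b : ℤ) - repMod d b) * e := by ring
  rw [h3]
  exact dvd_add h1 (h2.mul_right e)

/-! ### The bracket `⟨·⟩` and the Christol order -/

lemma cangle_eq (x : ℝ) : cangle x = x + 1 - ⌈x⌉ := by
  unfold cangle
  split_ifs with h
  · obtain ⟨m, rfl⟩ := h
    simp
  · have hx : Int.fract x ≠ 0 := fun h0 => by
      obtain ⟨m, hm⟩ := Int.fract_eq_zero_iff.1 h0
      exact h ⟨m, hm.symm⟩
    rw [Int.ceil_eq_add_one_sub_fract hx]
    ring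

lemma cangle_pos (x : ℝ) : 0 < cangle x := by
  rw [cangle_eq]
  linarith [Int.ceil_lt_add_one x]

lemma cangle_sub_int (x : ℝ) (m : ℤ) : cangle (x - m) = cangle x := by
  simp only [cangle_eq, Int.ceil_sub_intCast]
  push_cast
  ring

lemma cangle_eq_self {x : ℝ} (h0 : 0 < x) (h1 : x ≤ 1) : cangle x = x := by
  have : ⌈x⌉ = 1 := by
    rw [Int.ceil_eq_iff]
    constructor <;> push_cast <;> linarith
  rw [cangle_eq, this]
  simp

lemma cle_trans {x y z : ℝ} (hxy : cle x y) (hyz : cle y z) : cle x z := by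
  rcases hxy with h | ⟨h, h'⟩ <;> rcases hyz with k | ⟨k, k'⟩
  · exact .inl (h.trans k)
  · exact .inl (k ▸ h)
  · exact .inl (h ▸ k)
  · exact .inr ⟨h.trans k, k'.trans h'⟩

lemma exists_not_cle {κ : Type*} (T : Finset κ) (J : κ → ℝ) :
    ∃ y, ∀ t ∈ T, ¬ cle (J t) y := by
  have h : ∀ᶠ ε in nhdsWithin (0 : ℝ) (Set.Ioi 0), ∀ t ∈ T, ε < cangle (J t) :=
    (Filter.eventually_all_finset T).2 fun t _ =>
      nhdsWithin_le_nhds (Iio_mem_nhds (cangle_pos (J t)))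
  have h1 : ∀ᶠ ε in nhdsWithin (0 : ℝ) (Set.Ioi 0), ε < 1 :=
    nhdsWithin_le_nhds (Iio_mem_nhds one_pos)
  have h0 : ∀ᶠ ε in nhdsWithin (0 : ℝ) (Set.Ioi 0), 0 < ε := self_mem_nhdsWithin
  obtain ⟨y, hy, hy1, hy0⟩ := (h.and (h1.and h0)).exists
  refine ⟨y, fun t ht hc => ?_⟩
  have hlt := hy t ht
  rw [cle, cangle_eq_self hy0 hy1.le] at hc
  rcases hc with hc | ⟨hc, -⟩ <;> linarith

/-! ### Initial segments of two similarly ordered finite families -/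

lemma exists_cle_iff_le {κ : Type*} (T : Finset κ) (P J : κ → ℝ)
    (h : ∀ s ∈ T, ∀ t ∈ T, (P s ≤ P t ↔ cle (J s) (J t))) (x : ℝ) :
    ∃ y, ∀ t ∈ T, (P t ≤ x ↔ cle (J t) y) := by
  rcases (T.filter fun t => P t ≤ x).eq_empty_or_nonempty with h0 | h0
  · obtain ⟨y, hy⟩ := exists_not_cle T J
    exact ⟨y, fun t ht => iff_of_false (Finset.filter_eq_empty_iff.1 h0 ht) (hy t ht)⟩
  · obtain ⟨m, hm, hmax⟩ := Finset.exists_max_image _ P h0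
    rw [Finset.mem_filter] at hm
    refine ⟨J m, fun t ht => ?_⟩
    rw [← h t ht m hm.1]
    exact ⟨fun hx => hmax t (Finset.mem_filter.2 ⟨ht, hx⟩), fun hx => hx.trans hm.2⟩

lemma exists_le_iff_cle {κ : Type*} (T : Finset κ) (P J : κ → ℝ)
    (h : ∀ s ∈ T, ∀ t ∈ T, (P s ≤ P t ↔ cle (J s) (J t)))
    (hP : ∀ t ∈ T, 0 < P t ∧ P t ≤ 1) (y : ℝ) :
    ∃ x ∈ Set.Icc (0 : ℝ) 1, ∀ t ∈ T, (P t ≤ x ↔ cle (J t) y) := by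
  rcases (T.filter fun t => cle (J t) y).eq_empty_or_nonempty with h0 | h0
  · exact ⟨0, by simp, fun t ht =>
      iff_of_false (not_le.2 (hP t ht).1) (Finset.filter_eq_empty_iff.1 h0 ht)⟩
  · obtain ⟨m, hm, hmax⟩ := Finset.exists_max_image _ P h0
    rw [Finset.mem_filter] at hm
    refine ⟨P m, ⟨(hP m hm.1).1.le, (hP m hm.1).2⟩, fun t ht => ?_⟩
    exact ⟨fun hx => cle_trans ((h t ht m hm.1).1 hx) hm.2,
      fun hx => hmax t (Finset.mem_filter.2 ⟨ht, hx⟩)⟩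

/-! ### The generalized Dwork map -/

lemma dwork_eq {b : ℕ} {α θ : ℚ} (hθ : Nat.Coprime θ.den b) {k : ℤ} (h0 : 0 ≤ k)
    (h1 : k < (b : ℤ)) (hk : (b : ℚ) * θ - α = (k : ℚ)) : dwork b α = θ := by
  have hex : ∃ θ : ℚ, Nat.Coprime θ.den b ∧
      ∃ k : ℤ, 0 ≤ k ∧ k < (b : ℤ) ∧ (b : ℚ) * θ - α = (k : ℚ) := ⟨θ, hθ, k, h0, h1, hk⟩
  unfold dwork
  rw [dif_pos hex]
  obtain ⟨hη, l, l0, l1, hl⟩ := hex.choose_spec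
  set η := hex.choose
  have hb : (b : ℚ) ≠ 0 := by
    have : 0 < (b : ℤ) := h0.trans_lt h1
    exact_mod_cast this.ne'
  have hd : (b : ℤ) ∣ (l - k) * (η.den * θ.den : ℕ) := by
    refine ⟨η.num * θ.den - θ.num * η.den, ?_⟩
    have e1 : (l : ℚ) - k = b * (η - θ) := by rw [← hl, ← hk]; ring
    have e2 : ((l - k) * (η.den * θ.den : ℕ) : ℚ)
        = b * (η.num * θ.den - θ.num * η.den) := by
      rw [e1]
      push_cast
      rw [← Rat.mul_den_eq_num η, ← Rat.mul_den_eq_num θ]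
      ring
    exact_mod_cast e2
  have hcop : IsCoprime (b : ℤ) ((η.den * θ.den : ℕ) : ℤ) :=
    Nat.isCoprime_iff_coprime.2 (Nat.Coprime.mul_left hη hθ).symm
  have hd' := hcop.dvd_of_dvd_mul_right hd
  have hlk : l - k = 0 := Int.eq_zero_of_abs_lt_dvd hd' (by rw [abs_lt]; constructor <;> linarith)
  have hlk' : (l : ℚ) = k := by exact_mod_cast sub_eq_zero.1 hlk
  rw [hlk', ← hk] at hl
  exact mul_left_cancel₀ hb (by linarith)

/-! ### Arithmetic of a single pair -/

lemma cOf_dvd_fst (p : ℤ × ℤ) (b : ℕ) : (cOf p b : ℤ) ∣ p.1 :=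
  (Int.natCast_dvd_natCast.2 (Nat.gcd_dvd_left _ _)).trans (Int.gcd_dvd_left p.1 p.2)

lemma cOf_dvd_snd (p : ℤ × ℤ) (b : ℕ) : (cOf p b : ℤ) ∣ p.2 :=
  (Int.natCast_dvd_natCast.2 (Nat.gcd_dvd_left _ _)).trans (Int.gcd_dvd_right p.1 p.2)

lemma cOf_dvd (p : ℤ × ℤ) (b : ℕ) : cOf p b ∣ b := Nat.gcd_dvd_right _ _

lemma cOf_pos {p : ℤ × ℤ} (hs : p.2 ≠ 0) (b : ℕ) : 0 < cOf p b :=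
  Nat.gcd_pos_of_pos_left _ (Int.gcd_pos_of_ne_zero_right _ hs)

lemma gcd_div_cOf_eq_one_iff {p : ℤ × ℤ} (hs : p.2 ≠ 0) (b : ℕ) :
    Int.gcd (p.2 / (cOf p b : ℤ)) ((b / cOf p b : ℕ) : ℤ) = 1 ↔ inV p b := by
  have hb : (cOf p b : ℤ) ∣ (b : ℤ) := Int.natCast_dvd_natCast.2 (cOf_dvd p b)
  have hc := cOf_pos hs b
  have hd : cOf p b ∣ Int.gcd p.2 b := Int.dvd_gcd (cOf_dvd_snd p b) hb
  rw [Int.natCast_div, Int.gcd_div (cOf_dvd_snd p b) hb, Int.natAbs_natCast]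
  unfold inV
  rw [Nat.div_eq_iff_eq_mul_left hc hd, one_mul]
  rfl

/-- The jump abscissas of `qdelta b p.1 p.2` in `(0, 1]`, for `b` large. -/
def deltaJump (p : ℤ × ℤ) (b : ℕ) (e : ℤ) (k : ℕ) : ℝ :=
  (cangle (((e : ℚ) * ratOf p : ℚ) : ℝ) + (k : ℝ)) / (cOf p b : ℝ)
    + ((⌊1 - ratOf p⌋ : ℤ) : ℝ) / (b : ℝ)

/-- `⟨x⟩` for rational `x`. -/
def ratAngle (x : ℚ) : ℚ := x + 1 - ⌈x⌉

lemma cangle_ratCast (x : ℚ) : cangle (x : ℝ) = (ratAngle x : ℚ) := by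
  rw [cangle_eq, ratAngle, Rat.ceil_cast]
  push_cast
  ring

lemma ratAngle_pos (x : ℚ) : 0 < ratAngle x := by
  unfold ratAngle
  linarith [Int.ceil_lt_add_one x]

lemma ratAngle_le_one (x : ℚ) : ratAngle x ≤ 1 := by
  unfold ratAngle
  linarith [Int.le_ceil x]

lemma add_floor_one_sub (x : ℚ) : x + ⌊1 - x⌋ = ratAngle x := by
  have : ⌊1 - x⌋ = 1 - ⌈x⌉ := by
    rw [sub_eq_add_neg, add_comm, ← Nat.cast_one, Int.floor_add_natCast, Int.floor_neg]
    push_cast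
    ring
  rw [this, ratAngle]
  push_cast
  ring

/-- `s' · ⟨e·α⟩` is an integer, where `s' = s / c`. -/
lemma exists_ratAngle_mul {p : ℤ × ℤ} (hs : p.2 ≠ 0) (b : ℕ) (e : ℤ) :
    ∃ m : ℤ, ratAngle (e * ratOf p) * ((p.2 / (cOf p b : ℤ) : ℤ) : ℚ) = m := by
  obtain ⟨r', hr'⟩ := cOf_dvd_fst p b
  obtain ⟨s', hs'⟩ := cOf_dvd_snd p b
  have hc : (cOf p b : ℤ) ≠ 0 := by exact_mod_cast (cOf_pos hs b).ne'
  have hs0 : s' ≠ 0 := by rintro rfl; exact hs (by simpa using hs')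
  have hdiv : p.2 / (cOf p b : ℤ) = s' := by
    conv_lhs => rw [hs']
    exact Int.mul_ediv_cancel_left _ hc
  have hrat : ratOf p = (r' : ℚ) / s' := by
    unfold ratOf
    conv_lhs => rw [hr', hs']
    push_cast
    exact mul_div_mul_left _ _ (by exact_mod_cast hc)
  refine ⟨e * r' + (1 - ⌈(e * ratOf p : ℚ)⌉) * s', ?_⟩
  have hs0' : (s' : ℚ) ≠ 0 := by exact_mod_cast hs0
  rw [hdiv, ratAngle]
  push_cast
  have : (e * ratOf p : ℚ) * s' = e * r' := by rw [hrat]; field_simp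
  linear_combination this

/-- `(b/c) · ⟨e·α⟩ − α` is an integer. -/
lemma exists_mul_ratAngle_sub {p : ℤ × ℤ} (hs : p.2 ≠ 0) {b : ℕ} {e : ℤ}
    (he : p.2 ∣ (b : ℤ) * e - (cOf p b : ℤ)) :
    ∃ m : ℤ, ((b / cOf p b : ℕ) : ℚ) * ratAngle (e * ratOf p) - ratOf p = m := by
  obtain ⟨r', hr'⟩ := cOf_dvd_fst p b
  obtain ⟨b', hb'⟩ := cOf_dvd p b
  obtain ⟨t, ht⟩ := he
  have hc : cOf p b ≠ 0 := (cOf_pos hs b).ne'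
  have hcq : (cOf p b : ℚ) ≠ 0 := by exact_mod_cast hc
  have hdiv : b / cOf p b = b' := by
    exact Nat.div_eq_of_eq_mul_right (cOf_pos hs b) hb'
  refine ⟨t * r' + b' * (1 - ⌈(e * ratOf p : ℚ)⌉), ?_⟩
  rw [hdiv, ratAngle]
  have hsq : (p.2 : ℚ) ≠ 0 := by exact_mod_cast hs
  have hr : (p.2 : ℚ) * ratOf p = cOf p b * r' := by
    rw [ratOf, mul_div_cancel₀ _ hsq]; exact_mod_cast hr'
  have hbe : (cOf p b : ℚ) * b' * e - cOf p b = p.2 * t := by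
    have : (b : ℚ) * e - cOf p b = p.2 * t := by exact_mod_cast ht
    rwa [show (b : ℚ) = cOf p b * b' by exact_mod_cast hb'] at this
  have key : (b' : ℚ) * (e * ratOf p) - ratOf p = t * r' := by
    apply mul_left_cancel₀ hcq
    linear_combination ratOf p * hbe + t * hr
  push_cast
  linear_combination key

lemma abs_fst_lt_div {p : ℤ × ℤ} (hs : p.2 ≠ 0) {b : ℕ}
    (hb : p.1.natAbs * p.2.natAbs < b) : p.1.natAbs < b / cOf p b := by
  rw [Nat.lt_iff_add_one_le, Nat.le_div_iff_mul_le (cOf_pos hs b)]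
  by_contra! h
  obtain ⟨b', hb'⟩ := cOf_dvd p b
  have hc := cOf_pos hs b
  have hcs : cOf p b ≤ p.2.natAbs :=
    Nat.le_of_dvd (Int.natAbs_pos.2 hs) (Int.natCast_dvd.1 (cOf_dvd_snd p b))
  have h1 : b' < p.1.natAbs + 1 := by
    rw [mul_comm] at h
    exact lt_of_mul_lt_mul_left (hb' ▸ h : cOf p b * b' < _) (Nat.zero_le _)
  have : cOf p b * b' ≤ p.2.natAbs * p.1.natAbs := Nat.mul_le_mul hcs (by omega)
  rw [← hb', mul_comm] at this
  omega

/-- For large `b`, `D_{b'}(α) = ⟨e·α⟩`. -/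
lemma dwork_eq_ratAngle {p : ℤ × ℤ} (hs : p.2 ≠ 0) (hα : ¬ IsNonPosInt (ratOf p)) {b : ℕ}
    (hb : p.1.natAbs * p.2.natAbs < b) (hV : inV p b) {e : ℤ}
    (he : p.2 ∣ (b : ℤ) * e - (cOf p b : ℤ)) :
    dwork (b / cOf p b) (ratOf p) = ratAngle (e * ratOf p) ∧
    ∃ k : ℤ, 0 ≤ k ∧ k < ((b / cOf p b : ℕ) : ℤ) ∧
      ((b / cOf p b : ℕ) : ℚ) * ratAngle (e * ratOf p) - ratOf p = k := by
  obtain ⟨m, hm⟩ := exists_ratAngle_mul hs b e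
  obtain ⟨k, hk⟩ := exists_mul_ratAngle_sub hs he
  have hlt := abs_fst_lt_div hs hb
  have hgcd := (gcd_div_cOf_eq_one_iff hs b).2 hV
  set θ := ratAngle (e * ratOf p) with hθ
  set b' := b / cOf p b
  set s' := p.2 / (cOf p b : ℤ) with hs'
  have hs0 : s' ≠ 0 := by
    intro h0
    have := Int.ediv_mul_cancel (cOf_dvd_snd p b)
    rw [← hs', h0, zero_mul] at this
    exact hs this.symm
  have hs0' : (s' : ℚ) ≠ 0 := by exact_mod_cast hs0
  have hθs : θ = (m : ℚ) / s' := (eq_div_iff hs0').2 hm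
  have hden : Nat.Coprime θ.den b' := by
    have h1 : (θ.den : ℤ) ∣ s' := by
      rw [hθs, ← Rat.divInt_eq_div]
      exact Rat.den_dvd m s'
    have : Nat.Coprime s'.natAbs b' := by
      simpa [Int.gcd, Nat.Coprime] using hgcd
    exact this.coprime_dvd_left (Int.natCast_dvd.1 h1)
  have hθ0 : 0 < θ := ratAngle_pos _
  have hθ1 : θ ≤ 1 := ratAngle_le_one _
  have hb'0 : (0 : ℚ) < b' := by exact_mod_cast (Nat.zero_le _).trans_lt hlt
  have hrb : |(p.1 : ℚ)| < b' := by
    have : |p.1| < (b' : ℤ) := by rw [Int.abs_eq_natAbs]; exact_mod_cast hlt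
    exact_mod_cast this
  have hsq : (p.2 : ℚ) ≠ 0 := by exact_mod_cast hs
  have habs : |ratOf p| * |(p.2 : ℚ)| = |(p.1 : ℚ)| := by
    rw [← abs_mul, ratOf, div_mul_cancel₀ _ hsq]
  -- multiples of `1 / s'` that are positive are at least `1 / |s|`
  have hgap : ∀ n : ℤ, ∀ y : ℚ, 0 < y → y * s' = n → |ratOf p| < b' * y := by
    intro n y hy hyn
    have hn : n ≠ 0 := by
      rintro rfl
      simp [hs0', hy.ne'] at hyn
    have h1 : (1 : ℚ) ≤ y * |(s' : ℚ)| := by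
      rw [← abs_of_pos hy, ← abs_mul, hyn]
      exact_mod_cast Int.one_le_abs hn
    have h2 : |(s' : ℚ)| ≤ |(p.2 : ℚ)| := by
      have : |s'| ≤ |p.2| := by
        rw [Int.abs_eq_natAbs, Int.abs_eq_natAbs]
        exact_mod_cast Nat.le_of_dvd (Int.natAbs_pos.2 hs)
          (Int.natAbs_dvd_natAbs.2 (Int.ediv_dvd_of_dvd (cOf_dvd_snd p b)))
      exact_mod_cast this
    have h3 : (1 : ℚ) ≤ y * |(p.2 : ℚ)| := h1.trans (by gcongr)
    have hspos : 0 < |(p.2 : ℚ)| := abs_pos.2 hsq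
    refine lt_of_mul_lt_mul_right ?_ hspos.le
    rw [habs]
    nlinarith
  have hk0 : 0 ≤ k := by
    have := hgap m θ hθ0 hm
    have : (0 : ℚ) ≤ k := by rw [← hk]; linarith [le_abs_self (ratOf p)]
    exact_mod_cast this
  have hk1 : k < (b' : ℤ) := by
    have : (k : ℚ) < b' := by
      rw [← hk]
      rcases hθ1.lt_or_eq with h1 | h1
      · have := hgap (s' - m) (1 - θ) (by linarith) (by push_cast; rw [← hm]; ring)
        nlinarith [neg_le_abs (ratOf p)]
      · have hαint : ratOf p = ((b' - k : ℤ) : ℚ) := by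
          rw [h1] at hk
          push_cast
          linarith
        have : 0 < (b' - k : ℤ) := by
          by_contra! hle
          exact hα ⟨_, hle, hαint⟩
        have : (0 : ℚ) < ratOf p := by rw [hαint]; exact_mod_cast this
        rw [h1]
        linarith
    exact_mod_cast this
  exact ⟨dwork_eq hden hk0 hk1 hk, k, hk0, hk1, hk⟩

/-- The shift `ξ = D_{b'}(α) + ⌊1 − α⌋ / b'` of the step function lies in `(0, 1]`. -/
lemma shift_mem {p : ℤ × ℤ} (hs : p.2 ≠ 0) (hα : ¬ IsNonPosInt (ratOf p)) {b : ℕ}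
    (hb : p.1.natAbs * p.2.natAbs < b) (hV : inV p b) {e : ℤ}
    (he : p.2 ∣ (b : ℤ) * e - (cOf p b : ℤ)) :
    0 < ratAngle (e * ratOf p) + (⌊1 - ratOf p⌋ : ℚ) / ((b / cOf p b : ℕ) : ℚ) ∧
    ratAngle (e * ratOf p) + (⌊1 - ratOf p⌋ : ℚ) / ((b / cOf p b : ℕ) : ℚ) ≤ 1 := by
  obtain ⟨-, k, hk0, hk1, hk⟩ := dwork_eq_ratAngle hs hα hb hV he
  have hb' : (0 : ℚ) < ((b / cOf p b : ℕ) : ℚ) := by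
    exact_mod_cast (Nat.zero_le _).trans_lt (abs_fst_lt_div hs hb)
  have hξ : ratAngle (e * ratOf p) + (⌊1 - ratOf p⌋ : ℚ) / ((b / cOf p b : ℕ) : ℚ)
      = (k + ratAngle (ratOf p)) / ((b / cOf p b : ℕ) : ℚ) := by
    rw [← add_floor_one_sub (ratOf p), ← hk]
    field_simp
    ring
  rw [hξ]
  have h0 : (0 : ℚ) ≤ k := by exact_mod_cast hk0
  have h1 : (k : ℚ) + 1 ≤ ((b / cOf p b : ℕ) : ℚ) := by
    have := Int.cast_le (R := ℚ).2 (Int.add_one_le_iff.2 hk1)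
    rwa [Int.cast_add, Int.cast_one, Int.cast_natCast] at this
  have := ratAngle_pos (ratOf p)
  have := ratAngle_le_one (ratOf p)
  constructor
  · positivity
  · rw [div_le_one hb']
    linarith

lemma deltaJump_eq {p : ℤ × ℤ} (hs : p.2 ≠ 0) {b : ℕ} (e : ℤ) (k : ℕ) :
    deltaJump p b e k = (((ratAngle (e * ratOf p) +
      (⌊1 - ratOf p⌋ : ℚ) / ((b / cOf p b : ℕ) : ℚ) : ℚ) : ℝ) + k) / cOf p b := by
  have hc : (cOf p b : ℝ) ≠ 0 := by exact_mod_cast (cOf_pos hs b).ne'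
  unfold deltaJump
  rw [cangle_ratCast]
  push_cast
  rw [Nat.cast_div (cOf_dvd p b) hc]
  field_simp
  ring

lemma deltaJump_mem {p : ℤ × ℤ} (hs : p.2 ≠ 0) (hα : ¬ IsNonPosInt (ratOf p)) {b : ℕ}
    (hb : p.1.natAbs * p.2.natAbs < b) (hV : inV p b) {e : ℤ}
    (he : p.2 ∣ (b : ℤ) * e - (cOf p b : ℤ)) {k : ℕ} (hk : k < cOf p b) :
    0 < deltaJump p b e k ∧ deltaJump p b e k ≤ 1 := by
  have hc : (0 : ℝ) < cOf p b := by exact_mod_cast cOf_pos hs b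
  rw [deltaJump_eq hs]
  obtain ⟨h0, h1⟩ := shift_mem hs hα hb hV he
  set ξ := ratAngle (e * ratOf p) + (⌊1 - ratOf p⌋ : ℚ) / ((b / cOf p b : ℕ) : ℚ)
  have h0' : (0 : ℝ) < ξ := by exact_mod_cast h0
  have h1' : (ξ : ℝ) ≤ 1 := by exact_mod_cast h1
  have hk' : (k : ℝ) + 1 ≤ cOf p b := by exact_mod_cast hk
  constructor
  · positivity
  · rw [div_le_one hc]
    linarith

lemma qdelta_of_not_inV {p : ℤ × ℤ} (hs : p.2 ≠ 0) {b : ℕ} (hV : ¬ inV p b) (x : ℝ) :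
    qdelta b p.1 p.2 x = 0 :=
  if_neg fun h => hV ((gcd_div_cOf_eq_one_iff hs b).1 h)

/-- For large `b`, the step function counts its jumps up to `x`. -/
lemma qdelta_of_inV {p : ℤ × ℤ} (hs : p.2 ≠ 0) (hα : ¬ IsNonPosInt (ratOf p)) {b : ℕ}
    (hb : p.1.natAbs * p.2.natAbs < b) (hV : inV p b) {e : ℤ}
    (he : p.2 ∣ (b : ℤ) * e - (cOf p b : ℤ)) {x : ℝ} (hx : x ∈ Set.Icc (0 : ℝ) 1) :
    qdelta b p.1 p.2 x
      = ((Finset.range (cOf p b)).filter fun k => deltaJump p b e k ≤ x).card := by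
  have hc : (0 : ℝ) < cOf p b := by exact_mod_cast cOf_pos hs b
  obtain ⟨h0, h1⟩ := shift_mem hs hα hb hV he
  have hD := (dwork_eq_ratAngle hs hα hb hV he).1
  have hq : qdelta b p.1 p.2 x = ⌊(cOf p b : ℝ) * x - ((dwork (b / cOf p b) (ratOf p) : ℚ) : ℝ)
      - ((⌊1 - ratOf p⌋ : ℤ) : ℝ) / ((b / cOf p b : ℕ) : ℝ)⌋ + 1 :=
    if_pos ((gcd_div_cOf_eq_one_iff hs b).2 hV)
  simp only [deltaJump_eq hs]
  rw [hq, hD]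
  set ξ := ratAngle (e * ratOf p) + (⌊1 - ratOf p⌋ : ℚ) / ((b / cOf p b : ℕ) : ℚ) with hξ
  have hfl : (cOf p b : ℝ) * x - ((ratAngle (e * ratOf p) : ℚ) : ℝ)
      - ((⌊1 - ratOf p⌋ : ℤ) : ℝ) / ((b / cOf p b : ℕ) : ℝ) = cOf p b * x - ξ := by
    rw [hξ]
    push_cast
    ring
  rw [hfl]
  have h0' : (0 : ℝ) < ξ := by exact_mod_cast h0
  have h1' : (ξ : ℝ) ≤ 1 := by exact_mod_cast h1
  have hn0 : -1 ≤ ⌊(cOf p b : ℝ) * x - ξ⌋ := by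
    rw [Int.le_floor]
    push_cast
    have := mul_nonneg hc.le hx.1
    linarith
  have hn1 : ⌊(cOf p b : ℝ) * x - ξ⌋ < cOf p b := by
    rw [Int.floor_lt]
    push_cast
    nlinarith [hx.2]
  have hset : ((Finset.range (cOf p b)).filter fun k : ℕ => ((ξ : ℝ) + k) / cOf p b ≤ x)
      = Finset.range (⌊(cOf p b : ℝ) * x - ξ⌋ + 1).toNat := by
    ext k
    have hiff : ((ξ : ℝ) + k) / cOf p b ≤ x ↔ (k : ℤ) ≤ ⌊(cOf p b : ℝ) * x - ξ⌋ := by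
      rw [div_le_iff₀ hc, Int.le_floor]
      push_cast
      constructor <;> intro h <;> linarith
    rw [Finset.mem_filter, Finset.mem_range, Finset.mem_range, hiff]
    omega
  rw [hset, Finset.card_range]
  omega

/-! ### Comparison of the two families of jumps -/

/-- `⟨J⟩` for a jump abscissa `J` of `Ξ`. -/
def jumpFrac (p : ℤ × ℤ) (b : ℕ) (e : ℤ) (k : ℕ) : ℚ :=
  (ratAngle (e * ratOf p) + k) / cOf p b

lemma jumpPt_eq (p : ℤ × ℤ) (b : ℕ) (a e : ℤ) (k : ℕ) :
    jumpPt p b a e k = (jumpFrac p b e k : ℝ) - (⌊1 - (a : ℚ) * ratOf p⌋ : ℤ) := by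
  unfold jumpPt jumpFrac
  rw [cangle_ratCast]
  push_cast
  rfl

lemma deltaJump_eq_jumpFrac (p : ℤ × ℤ) (b : ℕ) (e : ℤ) (k : ℕ) :
    deltaJump p b e k = (jumpFrac p b e k : ℝ) + (⌊1 - ratOf p⌋ : ℤ) / (b : ℝ) := by
  unfold deltaJump jumpFrac
  rw [cangle_ratCast]
  push_cast
  rfl

lemma cangle_jumpPt {p : ℤ × ℤ} (hs : p.2 ≠ 0) {b : ℕ} (a e : ℤ) {k : ℕ} (hk : k < cOf p b) :
    cangle (jumpPt p b a e k) = jumpFrac p b e k := by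
  rw [jumpPt_eq, cangle_sub_int]
  have hc : (0 : ℚ) < cOf p b := by exact_mod_cast cOf_pos hs b
  have := ratAngle_pos (e * ratOf p)
  have := ratAngle_le_one (e * ratOf p)
  have hk' : (k : ℚ) + 1 ≤ cOf p b := by exact_mod_cast hk
  have h0 : 0 < jumpFrac p b e k := by unfold jumpFrac; positivity
  have h1 : jumpFrac p b e k ≤ 1 := by
    unfold jumpFrac
    rw [div_le_one hc]
    linarith
  exact cangle_eq_self (by exact_mod_cast h0) (by exact_mod_cast h1)

/-- `b · ⟨J⟩ − α` is an integer. -/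
lemma exists_mul_jumpFrac_sub {p : ℤ × ℤ} (hs : p.2 ≠ 0) {b : ℕ} {e : ℤ}
    (he : p.2 ∣ (b : ℤ) * e - (cOf p b : ℤ)) (k : ℕ) :
    ∃ m : ℤ, (b : ℚ) * jumpFrac p b e k - ratOf p = m := by
  obtain ⟨m, hm⟩ := exists_mul_ratAngle_sub hs he
  have hc : (cOf p b : ℚ) ≠ 0 := by exact_mod_cast (cOf_pos hs b).ne'
  refine ⟨m + (b / cOf p b : ℕ) * k, ?_⟩
  have hdiv : ((b / cOf p b : ℕ) : ℚ) = b / cOf p b := Nat.cast_div (cOf_dvd p b) hc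
  rw [Int.cast_add, Int.cast_mul, Int.cast_natCast, Int.cast_natCast, ← hm, hdiv, jumpFrac]
  field_simp
  ring

/-- `d · ⟨J⟩` is an integer. -/
lemma exists_mul_jumpFrac {p : ℤ × ℤ} (hs : p.2 ≠ 0) {d : ℕ} (hd : p.2.natAbs ∣ d) (b : ℕ)
    (e : ℤ) (k : ℕ) : ∃ m : ℤ, (d : ℚ) * jumpFrac p b e k = m := by
  obtain ⟨m, hm⟩ := exists_ratAngle_mul hs b e
  obtain ⟨t, ht⟩ := Int.natAbs_dvd.1 (Int.natCast_dvd_natCast.2 hd)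
  have hc : (cOf p b : ℚ) ≠ 0 := by exact_mod_cast (cOf_pos hs b).ne'
  set s' := p.2 / (cOf p b : ℤ) with hs'
  have hps : p.2 = s' * cOf p b := (Int.ediv_mul_cancel (cOf_dvd_snd p b)).symm
  refine ⟨t * (m + s' * k), ?_⟩
  have hdq : (d : ℚ) = s' * cOf p b * t := by
    rw [hps] at ht
    exact_mod_cast ht
  push_cast
  rw [← hm, hdq, jumpFrac]
  field_simp

lemma deltaJump_le_iff_cle {p q : ℤ × ℤ} (hp : p.2 ≠ 0) (hq : q.2 ≠ 0) {d b : ℕ} (hd0 : 0 < d)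
    (hpd : p.2.natAbs ∣ d) (hqd : q.2.natAbs ∣ d)
    (hb : d * (⌊1 - ratOf p⌋.natAbs + ⌊1 - ratOf q⌋.natAbs) < b) {a e f : ℤ} (ha : 0 < a)
    (he : p.2 ∣ (b : ℤ) * e - (cOf p b : ℤ)) (hf : q.2 ∣ (b : ℤ) * f - (cOf q b : ℤ))
    {k l : ℕ} (hk : k < cOf p b) (hl : l < cOf q b) :
    deltaJump p b e k ≤ deltaJump q b f l ↔ cle (jumpPt p b a e k) (jumpPt q b a f l) := by
  have hb0 : (0 : ℝ) < b := by exact_mod_cast (Nat.zero_le _).trans_lt hb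
  have hdR : (0 : ℝ) < d := by exact_mod_cast hd0
  have hsmall : |(⌊1 - ratOf p⌋ : ℝ)| + |(⌊1 - ratOf q⌋ : ℝ)| < b / d := by
    rw [lt_div_iff₀ hdR]
    have h1 : ∀ z : ℤ, |(z : ℝ)| = (z.natAbs : ℝ) := fun z => by
      rw [Nat.cast_natAbs, Int.cast_abs]
    rw [h1, h1, mul_comm]
    exact_mod_cast hb
  -- distinct values of `⟨J⟩` are `1 / d` apart, which dominates the perturbation
  have hgap : ∀ {F G : ℚ} {y z : ℤ}, (∃ m : ℤ, (d : ℚ) * F = m) → (∃ m : ℤ, (d : ℚ) * G = m) →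
      |(y : ℝ)| + |(z : ℝ)| < b / d → F < G → (F : ℝ) + y / b < G + z / b := by
    rintro F G y z ⟨m, hm⟩ ⟨n, hn⟩ hyz hFG
    have h1 : (m : ℚ) < n := by
      rw [← hm, ← hn]
      have : (0 : ℚ) < d := by exact_mod_cast hd0
      gcongr
    have h2 : (d : ℚ) * F + 1 ≤ d * G := by
      rw [hm, hn]
      exact_mod_cast h1
    have h3 : (d : ℝ) * F + 1 ≤ d * G := by exact_mod_cast h2
    have h4 : (F : ℝ) + 1 / d ≤ G := by
      have : (d : ℝ) * (F + 1 / d) ≤ d * G := by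
        rw [mul_add, mul_one_div_cancel hdR.ne']
        exact h3
      exact le_of_mul_le_mul_left this hdR
    have h5 : ((y : ℝ) - z) / b < 1 / d := by
      rw [div_lt_iff₀ hb0, one_div_mul_eq_div]
      linarith [le_abs_self (y : ℝ), neg_le_abs (z : ℝ)]
    rw [sub_div] at h5
    linarith
  have hFp := exists_mul_jumpFrac hp hpd b e k
  have hFq := exists_mul_jumpFrac hq hqd b f l
  rw [cle, cangle_jumpPt hp a e hk, cangle_jumpPt hq a f hl, deltaJump_eq_jumpFrac,
    deltaJump_eq_jumpFrac, jumpPt_eq, jumpPt_eq]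
  rcases lt_trichotomy (jumpFrac p b e k) (jumpFrac q b f l) with h | h | h
  · exact iff_of_true (hgap hFp hFq hsmall h).le (.inl (by exact_mod_cast h))
  · obtain ⟨m, hm⟩ := exists_mul_jumpFrac_sub hp he k
    obtain ⟨n, hn⟩ := exists_mul_jumpFrac_sub hq hf l
    have hpq : ratOf p = ratOf q + ((n - m : ℤ) : ℚ) := by
      push_cast
      rw [← hm, ← hn, h]
      ring
    have h1 : ⌊1 - ratOf p⌋ = ⌊1 - ratOf q⌋ - (n - m) := by
      rw [hpq, ← sub_sub, Int.floor_sub_intCast]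
    have h2 : ⌊1 - (a : ℚ) * ratOf p⌋ = ⌊1 - (a : ℚ) * ratOf q⌋ - a * (n - m) := by
      rw [hpq, mul_add, ← sub_sub, ← Int.cast_mul, Int.floor_sub_intCast]
    rw [h, h1, h2]
    simp only [lt_self_iff_false, true_and, false_or, add_le_add_iff_left,
      div_le_div_iff_of_pos_right hb0, sub_le_sub_iff_left, Int.cast_le, sub_le_self_iff]
    exact (mul_nonneg_iff_of_pos_left ha).symm
  · refine iff_of_false (not_le.2 (hgap hFq hFp (by rwa [add_comm]) h)) ?_
    have h' : (jumpFrac q b f l : ℝ) < jumpFrac p b e k := by exact_mod_cast h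
    rintro (h1 | ⟨h1, -⟩) <;> linarith

lemma aOf_pos (d b : ℕ) : 0 < aOf d b := by
  unfold aOf
  split_ifs with h
  · exact h.choose_spec.1
  · exact one_pos

lemma jumpPt_repMod {p : ℤ × ℤ} {d : ℕ} (h : p.2.natAbs ∣ d) (b : ℕ) (a e : ℤ) (k : ℕ) :
    jumpPt p (repMod d b) a e k = jumpPt p b a e k := by
  unfold jumpPt
  rw [cOf_repMod h]

/-- If `x` and `y` cut the jumps of a pair at the same place, the step functions agree there. -/
lemma qdelta_eq_XiCount {p : ℤ × ℤ} (hs : p.2 ≠ 0) (hα : ¬ IsNonPosInt (ratOf p)) {d b : ℕ}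
    (hd : p.2.natAbs ∣ d) (hb : p.1.natAbs * p.2.natAbs < b) {a e : ℤ}
    (he : goodChoice p (repMod d b) e) {x y : ℝ} (hx : x ∈ Set.Icc (0 : ℝ) 1)
    (hxy : inV p b → ∀ k < cOf p b, (deltaJump p b e k ≤ x ↔ cle (jumpPt p b a e k) y)) :
    qdelta b p.1 p.2 x = (XiCount p (repMod d b) a e y : ℤ) := by
  unfold XiCount
  rw [inV_repMod hd, cOf_repMod hd]
  split_ifs with hV
  · rw [qdelta_of_inV hs hα hb hV (goodChoice_repMod hd hV he) hx]
    congr 2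
    refine Finset.filter_congr fun k hk => ?_
    rw [jumpPt_repMod hd]
    exact hxy hV k (Finset.mem_range.1 hk)
  · simpa using qdelta_of_not_inV hs hV x

/-- The finite set of indices `(i, k)` of jumps. -/
def jumpIndices {ι : Type*} [Fintype ι] (q : ι → ℤ × ℤ) (b : ℕ) : Finset (Σ _ : ι, ℕ) :=
  (Finset.univ.filter fun i => inV (q i) b).sigma fun i => Finset.range (cOf (q i) b)

lemma mem_jumpIndices {ι : Type*} [Fintype ι] {q : ι → ℤ × ℤ} {b : ℕ} {t : Σ _ : ι, ℕ} :
    t ∈ jumpIndices q b ↔ inV (q t.1) b ∧ t.2 < cOf (q t.1) b := by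
  simp [jumpIndices]

end

/-- for `b` large enough, the image of `[0,1]` under `Δ_b^{𝐫,𝐭}` equals the
image of `ℝ` under `Ξ_{𝐫,𝐭}(b̲, ·)`, where `b̲ ∈ {1,…,d_{𝐫,𝐭}}` represents `b` modulo
`d_{𝐫,𝐭}`. -/
theorem delta_image_eq_xi_range {v w : ℕ} (rr : Fin v → ℤ × ℤ) (tt : Fin w → ℤ × ℤ)
    (hs : ∀ i, (rr i).2 ≠ 0) (hu : ∀ j, (tt j).2 ≠ 0)
    (hr : ∀ i, ¬ IsNonPosInt (ratOf (rr i))) (ht : ∀ j, ¬ IsNonPosInt (ratOf (tt j))) :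
    ∃ B : ℕ, 0 < B ∧ ∀ b : ℕ, B ≤ b →
      ∀ (e : Fin v → ℤ) (f : Fin w → ℤ),
        (∀ i, goodChoice (rr i) (repMod (dRT rr tt) b) (e i)) →
        (∀ j, goodChoice (tt j) (repMod (dRT rr tt) b) (f j)) →
          (fun x : ℝ => qDeltaFn b rr tt x) '' Set.Icc (0 : ℝ) 1 =
            Set.range (fun x : ℝ => Xi rr tt (repMod (dRT rr tt) b) e f x) := by
  set d := dRT rr tt with hd
  have hrd : ∀ i, (rr i).2.natAbs ∣ d := fun i =>
    (Finset.dvd_lcm (f := fun i => ((rr i).2).natAbs) (Finset.mem_univ i)).trans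
      (Nat.dvd_lcm_left _ _)
  have htd : ∀ j, (tt j).2.natAbs ∣ d := fun j =>
    (Finset.dvd_lcm (f := fun j => ((tt j).2).natAbs) (Finset.mem_univ j)).trans
      (Nat.dvd_lcm_right _ _)
  have hd0 : 0 < d := by
    refine Nat.lcm_pos (Nat.pos_of_ne_zero ?_) (Nat.pos_of_ne_zero ?_) <;>
      simp [Finset.lcm_eq_zero_iff, hs, hu]
  let q : Fin v ⊕ Fin w → ℤ × ℤ := Sum.elim rr tt
  have hq : ∀ i, (q i).2 ≠ 0 := by rintro (i | j) <;> [exact hs i; exact hu j]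
  have hqα : ∀ i, ¬ IsNonPosInt (ratOf (q i)) := by rintro (i | j) <;> [exact hr i; exact ht j]
  have hqd : ∀ i, (q i).2.natAbs ∣ d := by rintro (i | j) <;> [exact hrd i; exact htd j]
  let M : Fin v ⊕ Fin w → ℕ := fun i =>
    (q i).1.natAbs * (q i).2.natAbs + ⌊1 - ratOf (q i)⌋.natAbs
  have hM : ∀ i, M i ≤ ∑ i, M i := fun i =>
    Finset.single_le_sum (fun _ _ => Nat.zero_le _) (Finset.mem_univ i)
  refine ⟨d * (2 * ∑ i, M i) + 1, Nat.succ_pos _, fun b hb e f he hf => ?_⟩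
  let E : Fin v ⊕ Fin w → ℤ := Sum.elim e f
  have hE : ∀ i, goodChoice (q i) (repMod d b) (E i) := by
    rintro (i | j) <;> [exact he i; exact hf j]
  have hb1 : ∀ i, (q i).1.natAbs * (q i).2.natAbs < b := fun i => by
    have h1 := hM i
    have h2 : 2 * ∑ i, M i ≤ d * (2 * ∑ i, M i) := Nat.le_mul_of_pos_left _ hd0
    simp only [M] at h1 h2 hb
    omega
  have hb2 : ∀ i j, d * (⌊1 - ratOf (q i)⌋.natAbs + ⌊1 - ratOf (q j)⌋.natAbs) < b := fun i j => by
    refine lt_of_le_of_lt (Nat.mul_le_mul_left d ?_) (Nat.lt_of_succ_le hb)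
    have h1 := hM i
    have h2 := hM j
    simp only [M] at h1 h2 ⊢
    omega
  set a : ℤ := ((aOf d (repMod d b) : ℕ) : ℤ) with ha
  have ha0 : 0 < a := Int.natCast_pos.2 (aOf_pos _ _)
  let T := jumpIndices q b
  let P : (Σ _ : Fin v ⊕ Fin w, ℕ) → ℝ := fun t => deltaJump (q t.1) b (E t.1) t.2
  let J : (Σ _ : Fin v ⊕ Fin w, ℕ) → ℝ := fun t => jumpPt (q t.1) b a (E t.1) t.2
  have hPJ : ∀ s ∈ T, ∀ t ∈ T, (P s ≤ P t ↔ cle (J s) (J t)) := by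
    intro s hs' t ht'
    rw [mem_jumpIndices] at hs' ht'
    exact deltaJump_le_iff_cle (hq _) (hq _) hd0 (hqd _) (hqd _) (hb2 _ _) ha0
      (goodChoice_repMod (hqd _) hs'.1 (hE _)) (goodChoice_repMod (hqd _) ht'.1 (hE _))
      hs'.2 ht'.2
  have hP : ∀ t ∈ T, 0 < P t ∧ P t ≤ 1 := by
    intro t ht'
    rw [mem_jumpIndices] at ht'
    exact deltaJump_mem (hq _) (hqα _) (hb1 _) ht'.1
      (goodChoice_repMod (hqd _) ht'.1 (hE _)) ht'.2
  have key : ∀ x ∈ Set.Icc (0 : ℝ) 1, ∀ y, (∀ t ∈ T, (P t ≤ x ↔ cle (J t) y)) →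
      qDeltaFn b rr tt x = Xi rr tt (repMod d b) e f y := by
    intro x hx y hxy
    have h : ∀ i, qdelta b (q i).1 (q i).2 x = (XiCount (q i) (repMod d b) a (E i) y : ℤ) :=
      fun i => qdelta_eq_XiCount (hq i) (hqα i) (hqd i) (hb1 i) (hE i) hx
        fun hV k hk => hxy ⟨i, k⟩ (mem_jumpIndices.2 ⟨hV, hk⟩)
    unfold qDeltaFn Xi
    exact congrArg₂ _ (Finset.sum_congr rfl fun i _ => h (.inl i))
      (Finset.sum_congr rfl fun j _ => h (.inr j))
  ext n
  constructor
  · rintro ⟨x, hx, rfl⟩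
    obtain ⟨y, hy⟩ := exists_cle_iff_le T P J hPJ x
    exact ⟨y, (key x hx y hy).symm⟩
  · rintro ⟨y, rfl⟩
    obtain ⟨x, hx, hxy⟩ := exists_le_iff_cle T P J hPJ hP y
    exact ⟨x, hx, key x hx y hxy⟩
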